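/- arXiv:2007.12987 — 2 statements merged into one kernel-verified Lean document; each statement's English description precedes it below -/
import Mathlib

section
/- (Pointwise differential privacy via liftings.) Let B be a countable set, D a set with adjacency relation ∼, and A : D → Δ(B). Then A is ε-differentially private with respect to ∼ if and only if for every b ∈ B and every pair d1 ∼ d2, the distributions A(d1) and A(d2) are related by the ε-approximate lifting of the relation Ψ_b = {(x1, x2) ∈ B × B | x1 = b ⟹ x2 = b}. -/
open scoped BigOperators

noncomputable section

/-- Mass that a (sub)distribution assigns to a set of outcomes. -/
def mass {A : Type*} (μ : A → ℝ) (E : Set A) : ℝ := ∑' a : E, μ a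

/-- The ε-divergence `Δ_ε(μ1, μ2) = sup_{E ⊆ A} (μ1(E) − exp(ε)·μ2(E))`. -/
def eDiv {A : Type*} (ε : ℝ) (μ1 μ2 : A → ℝ) : ℝ :=
  ⨆ E : Set A, (mass μ1 E - Real.exp ε * mass μ2 E)

/-- `μ` is a probability distribution: pointwise nonnegative with total mass 1. -/
def IsProb {A : Type*} (μ : A → ℝ) : Prop :=
  (∀ a, 0 ≤ μ a) ∧ (∑' a, μ a) = 1

/-- `μ` is a subdistribution: pointwise nonnegative, summable, with total mass at most 1. -/
def IsSubProb {A : Type*} (μ : A → ℝ) : Prop :=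
  (∀ a, 0 ≤ μ a) ∧ Summable μ ∧ (∑' a, μ a) ≤ 1

/-- ε-approximate lifting `μ1 (Ψ)^ε μ2` of a relation `Ψ` between two
probability distributions. -/
def Lifting {A B : Type*} (ε : ℝ) (Ψ : A → B → Prop) (μ1 : A → ℝ) (μ2 : B → ℝ) : Prop :=
  ∃ μL μR : A × B → ℝ, IsProb μL ∧ IsProb μR ∧
    (∀ a, (∑' b, μL (a, b)) = μ1 a) ∧
    (∀ b, (∑' a, μR (a, b)) = μ2 b) ∧
    (∀ p : A × B, (0 < μL p ∨ 0 < μR p) → Ψ p.1 p.2) ∧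
    eDiv ε μL μR ≤ 0

/-- `A` is ε-differentially private w.r.t. the adjacency relation `adj`. -/
def DP {D O : Type*} (ε : ℝ) (adj : D → D → Prop) (A : D → O → ℝ) : Prop :=
  ∀ d1 d2, adj d1 d2 → ∀ o, A d1 o ≤ Real.exp ε * A d2 o

/-- Monadic bind of distributions: `(bind μ f)(b) = Σ_a μ(a)·f(a)(b)`. -/
def pbind {A B : Type*} (μ : A → ℝ) (f : A → B → ℝ) : B → ℝ :=
  fun b => ∑' a, μ a * f a b

/-- Dirac (point-mass) distribution at `a`. -/
def punit {A : Type*} [DecidableEq A] (a : A) : A → ℝ :=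
  fun x => if x = a then 1 else 0

/-- Pushforward of a distribution along `g`: `(map g μ)(b) = Σ_{a : g(a)=b} μ(a)`. -/
def pmap {A B : Type*} (g : A → B) (μ : A → ℝ) : B → ℝ :=
  fun b => ∑' a : {a // g a = b}, μ (a : A)

/-- Discrete Laplace distribution with mean `v` and (inverse scale) parameter `ε`:
`dLap(v, ε)(z) = ((exp ε − 1)/(exp ε + 1))·exp(−ε·|z − v|)`. -/
def dLap (v : ℤ) (ε : ℝ) : ℤ → ℝ :=
  fun z => ((Real.exp ε - 1) / (Real.exp ε + 1)) * Real.exp (-ε * ((|z - v| : ℤ) : ℝ))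

end

theorem isProb_summable {A : Type*} {μ : A → ℝ} (h : IsProb μ) : Summable μ := by
  by_contra hn
  have h1 := h.2
  rw [tsum_eq_zero_of_not_summable hn] at h1
  exact zero_ne_one h1

theorem mass_nonneg' {A : Type*} {μ : A → ℝ} (h : IsProb μ) (E : Set A) : 0 ≤ mass μ E :=
  tsum_nonneg fun a => h.1 a

theorem mass_le_one' {A : Type*} {μ : A → ℝ} (h : IsProb μ) (E : Set A) : mass μ E ≤ 1 := by
  rw [← h.2]
  exact Summable.tsum_subtype_le μ E h.1 (isProb_summable h)

open Classical in
theorem diag_isProb {A : Type*} {μ : A → ℝ} (h : IsProb μ) :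
    IsProb (fun p : A × A => if p.1 = p.2 then μ p.1 else 0) := by
  refine ⟨fun p => ?_, ?_⟩
  · dsimp only
    split_ifs
    · exact h.1 _
    · exact le_rfl
  · rw [← h.2]
    have hi : Function.Injective (fun a : A => (a, a)) := fun a b hab => (Prod.ext_iff.1 hab).1
    rw [← hi.tsum_eq]
    · simp
    · rintro ⟨x, y⟩ hxy
      have : x = y := by
        by_contra hne
        simp [hne] at hxy
      exact ⟨x, by simp [this]⟩

theorem le_of_eDiv {A : Type*} {ε : ℝ} {μ ν : A → ℝ} (hμ : IsProb μ) (hν : IsProb ν)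
    (h : eDiv ε μ ν ≤ 0) (a : A) : μ a ≤ Real.exp ε * ν a := by
  have hb : BddAbove (Set.range fun E : Set A => mass μ E - Real.exp ε * mass ν E) := by
    refine ⟨1, ?_⟩
    rintro _ ⟨E, rfl⟩
    have h1 := mass_le_one' hμ E
    have h2 := mul_nonneg (Real.exp_pos ε).le (mass_nonneg' hν E)
    dsimp only
    linarith
  have h1 := (le_ciSup hb {a}).trans h
  simp only [mass, tsum_singleton] at h1
  linarith

/-- Pointwise differential privacy via liftings: `A` is ε-DP iff for every output
`b` and adjacent `d1 ∼ d2`, `A d1 (Ψ_b)^ε A d2` where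
`Ψ_b = {(x1, x2) | x1 = b → x2 = b}`. -/
theorem pointwise_dp_iff_lifting {D B : Type*} [Countable B] (ε : ℝ) (hε : 0 ≤ ε)
    (adj : D → D → Prop) (A : D → B → ℝ) (hA : ∀ d, IsProb (A d)) :
    DP ε adj A ↔
      ∀ b : B, ∀ d1 d2, adj d1 d2 →
        Lifting ε (fun x1 x2 => x1 = b → x2 = b) (A d1) (A d2) := by 
  classical
  constructor
  · intro hdp b d1 d2 hadj
    refine ⟨_, _, diag_isProb (hA d1), diag_isProb (hA d2), ?_, ?_, ?_, ?_⟩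
    · intro a
      simp
    · intro a
      simp
    · rintro ⟨x, y⟩ hp hx
      by_contra hy
      have hne : x ≠ y := fun e => hy (e ▸ hx)
      simp [hne] at hp
    · refine ciSup_le fun E => ?_
      rw [sub_nonpos]
      unfold mass
      rw [← tsum_mul_left]
      refine Summable.tsum_le_tsum ?_ ((isProb_summable (diag_isProb (hA d1))).subtype E)
        (((isProb_summable (diag_isProb (hA d2))).subtype E).mul_left _)
      rintro ⟨⟨x, y⟩, _⟩
      by_cases hxy : x = y
      · simpa [hxy] using hdp d1 d2 hadj y
      · simp [hxy]
  · intro h d1 d2 hadj b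
    obtain ⟨μL, μR, hL, hR, h1, h2, hs, hd⟩ := h b d1 d2 hadj
    have e1 : A d1 b = μL (b, b) := by
      rw [← h1 b]
      refine tsum_eq_single b fun y hy => ?_
      by_contra hne
      exact hy (hs (b, y) (Or.inl (lt_of_le_of_ne (hL.1 _) (Ne.symm hne))) rfl)
    have e2 : μR (b, b) ≤ A d2 b := by
      rw [← h2 b]
      have hsum : Summable fun a => μR (a, b) :=
        (isProb_summable hR).comp_injective (i := fun a => (a, b))
          fun x y hxy => (Prod.ext_iff.1 hxy).1
      exact hsum.le_tsum b fun j _ => hR.1 _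
    rw [e1]
    exact (le_of_eDiv hL hR hd (b, b)).trans
      (mul_le_mul_of_nonneg_left e2 (Real.exp_pos ε).le)
end

section
/- (The corrected above-threshold algorithm is ε-differentially private.) Let ε > 0, n ≥ 1, t ∈ ℤ, and let q1, …, qn : D → ℤ be queries each 1-sensitive with respect to an adjacency relation ∼ on D. Define the algorithm AT : D → Δ({1, …, n} ∪ {⊥}) as follows: sample T from dLap(t, ε/2); independently sample S_i from dLap(q_i(d), ε/4) for i = 1, …, n; output the least index i with S_i ≥ T if one exists, and ⊥ otherwise. Then AT is ε-differentially private with respect to ∼. -/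
open scoped BigOperators

noncomputable section

/-- The least index `i` with `T ≤ S i`, or `none` if there is no such index. -/
def firstAbove {n : ℕ} (T : ℤ) (S : Fin n → ℤ) : Option (Fin n) :=
  if h : ∃ i, T ≤ S i then
    some ((Finset.univ.filter fun i => T ≤ S i).min'
      ⟨h.choose, Finset.mem_filter.mpr ⟨Finset.mem_univ _, h.choose_spec⟩⟩)
  else none

/-- The corrected above-threshold algorithm: sample a noisy threshold `T` from
`dLap(t, ε/2)`, independently sample `S i` from `dLap(q i, ε/4)` for each query,
and return the least index `i` with `S i ≥ T`, or `none` (⊥) if there is none. -/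
def AT (n : ℕ) (t : ℤ) (ε : ℝ) (qv : Fin n → ℤ) : Option (Fin n) → ℝ :=
  fun o => ∑' T : ℤ, ∑' S : Fin n → ℤ,
    (dLap t (ε / 2) T * ∏ i, dLap (qv i) (ε / 4) (S i)) *
      (if firstAbove T S = o then 1 else 0)

end

lemma dLap_nonneg' (v : ℤ) (ε : ℝ) (hε : 0 < ε) (z : ℤ) : 0 ≤ dLap v ε z := by
  unfold dLap
  have : 1 ≤ Real.exp ε := Real.one_le_exp hε.le
  have h2 : 0 ≤ Real.exp ε - 1 := by linarith
  positivity

lemma dLap_summable' (v : ℤ) (ε : ℝ) (hε : 0 < ε) : Summable (dLap v ε) := by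
  unfold dLap
  apply Summable.mul_left
  have h : Summable (fun z : ℤ => Real.exp (-ε * ((|z| : ℤ) : ℝ))) := by
    have h0 : Summable (fun n : ℕ => Real.exp (-ε * (n : ℝ))) := by
      have := Real.summable_exp_nat_mul_iff (a := -ε) |>.2 (by linarith)
      simpa [mul_comm] using this
    apply Summable.of_nat_of_neg <;> simpa using h0
  exact (Equiv.subRight v).summable_iff.2 h

lemma dLap_shift' (v w : ℤ) (ε : ℝ) (hε : 0 < ε) (z z' m : ℤ) (h : |z' - w| ≤ |z - v| + m) :
    dLap v ε z ≤ Real.exp (ε * m) * dLap w ε z' := by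
  unfold dLap
  have h1 : 1 ≤ Real.exp ε := Real.one_le_exp hε.le
  have h2 : 0 ≤ (Real.exp ε - 1) / (Real.exp ε + 1) :=
    div_nonneg (by linarith) (by linarith)
  rw [mul_left_comm, ← Real.exp_add]
  apply mul_le_mul_of_nonneg_left _ h2
  apply Real.exp_le_exp.2
  have h3 : ((|z' - w| : ℤ) : ℝ) ≤ ((|z - v| : ℤ) : ℝ) + m := by exact_mod_cast h
  nlinarith

lemma prod_summable' {n : ℕ} (f : Fin n → ℤ → ℝ) (h0 : ∀ i z, 0 ≤ f i z)
    (hs : ∀ i, Summable (f i)) : Summable (fun S : Fin n → ℤ => ∏ i, f i (S i)) := by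
  classical
  apply summable_of_sum_le (c := ∏ i, ∑' z, f i z)
  · intro S
    exact Finset.prod_nonneg fun i _ => h0 i _
  · intro u
    calc ∑ S ∈ u, ∏ i, f i (S i)
        ≤ ∑ S ∈ Fintype.piFinset (fun i => u.image (fun S => S i)), ∏ i, f i (S i) := by
          apply Finset.sum_le_sum_of_subset_of_nonneg
          · intro S hS
            rw [Fintype.mem_piFinset]
            intro i
            exact Finset.mem_image_of_mem _ hS
          · intro S _ _
            exact Finset.prod_nonneg fun i _ => h0 i _
      _ = ∏ i, ∑ z ∈ u.image (fun S => S i), f i z := by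
          rw [Finset.prod_univ_sum]
      _ ≤ _ := by
          apply Finset.prod_le_prod
          · intro i _
            exact Finset.sum_nonneg fun z _ => h0 i z
          · intro i _
            exact (hs i).sum_le_tsum _ (fun z _ => h0 i z)

lemma firstAbove_none' {n : ℕ} (T : ℤ) (S : Fin n → ℤ) :
    firstAbove T S = none ↔ ∀ i, S i < T := by
  unfold firstAbove
  split_ifs with h
  · simpa using h
  · simpa using h

lemma firstAbove_some' {n : ℕ} (T : ℤ) (S : Fin n → ℤ) (k : Fin n) :
    firstAbove T S = some k ↔ T ≤ S k ∧ ∀ i < k, S i < T := by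
  unfold firstAbove
  split_ifs with h
  · refine (Option.some_inj.trans (Finset.min'_eq_iff _ _ _)).trans ?_
    simp only [Finset.mem_filter, Finset.mem_univ, true_and]
    refine and_congr_right fun _ => forall_congr' fun i => ?_
    rw [← not_lt, ← not_lt (b := k)]
    tauto
  · push Not at h
    simp only [false_iff, not_and]
    intro h1
    exact absurd (h k) (by omega)

lemma AT_core' (n : ℕ) (t : ℤ) (ε : ℝ) (hε : 0 < ε) (a b c : Fin n → ℤ) (o : Option (Fin n))
    (hev : ∀ T S, firstAbove T S = o → firstAbove (T + 1) (S + c) = o)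
    (hpr : ∀ S : Fin n → ℤ, ∏ i, dLap (a i) (ε / 4) (S i)
      ≤ Real.exp (ε / 2) * ∏ i, dLap (b i) (ε / 4) ((S + c) i)) :
    AT n t ε a o ≤ Real.exp ε * AT n t ε b o := by
  have hε2 : 0 < ε / 2 := by positivity
  have hε4 : 0 < ε / 4 := by positivity
  have hP0 : ∀ (v : Fin n → ℤ) (S : Fin n → ℤ), 0 ≤ ∏ i, dLap (v i) (ε / 4) (S i) :=
    fun v S => Finset.prod_nonneg fun i _ => dLap_nonneg' _ _ hε4 _
  have hPs : ∀ (v : Fin n → ℤ), Summable fun S : Fin n → ℤ => ∏ i, dLap (v i) (ε / 4) (S i) :=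
    fun v => prod_summable' _ (fun i z => dLap_nonneg' _ _ hε4 z) fun i => dLap_summable' _ _ hε4
  obtain ⟨F, hF⟩ : ∃ F : (Fin n → ℤ) → ℤ → (Fin n → ℤ) → ℝ, ∀ v T S, F v T S =
    (dLap t (ε / 2) T * ∏ i, dLap (v i) (ε / 4) (S i)) *
      (if firstAbove T S = o then 1 else 0) := ⟨_, fun _ _ _ => rfl⟩
  have hAT : ∀ v, AT n t ε v o = ∑' T, ∑' S, F v T S := by
    intro v
    simp only [AT, hF]
  have hF0 : ∀ v T S, 0 ≤ F v T S := fun v T S => by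
    rw [hF]; exact mul_nonneg (mul_nonneg (dLap_nonneg' _ _ hε2 _) (hP0 _ _)) (by split_ifs <;> norm_num)
  have hFle : ∀ v T S, F v T S ≤ dLap t (ε / 2) T * ∏ i, dLap (v i) (ε / 4) (S i) :=
    fun v T S => by
      rw [hF]; exact mul_le_of_le_one_right (mul_nonneg (dLap_nonneg' _ _ hε2 _) (hP0 _ _))
        (by split_ifs <;> norm_num)
  have hFs : ∀ v T, Summable (F v T) := fun v T =>
    Summable.of_nonneg_of_le (hF0 v T) (hFle v T) ((hPs v).mul_left _)
  have hFss : ∀ v, Summable fun T => ∑' S, F v T S := by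
    intro v
    refine Summable.of_nonneg_of_le (fun T => tsum_nonneg (hF0 v T)) (fun T => ?_)
      ((dLap_summable' t _ hε2).mul_right (∑' S : Fin n → ℤ, ∏ i, dLap (v i) (ε / 4) (S i)))
    rw [← tsum_mul_left]
    exact (hFs v T).tsum_le_tsum (hFle v T) ((hPs v).mul_left _)
  have key : ∀ T S, F a T S ≤ Real.exp ε * F b (T + 1) (S + c) := by
    intro T S
    by_cases h : firstAbove T S = o
    · have h' := hev T S h
      simp only [hF, h, h', if_true, mul_one]
      have h1 : dLap t (ε / 2) T ≤ Real.exp (ε / 2) * dLap t (ε / 2) (T + 1) := by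
        have := dLap_shift' t t (ε / 2) hε2 T (T + 1) 1 (by
          rw [abs_le]; constructor <;> cases abs_cases (T - t) <;> omega)
        simpa using this
      calc _ ≤ (Real.exp (ε / 2) * dLap t (ε / 2) (T + 1)) *
            (Real.exp (ε / 2) * ∏ i, dLap (b i) (ε / 4) ((S + c) i)) :=
            mul_le_mul h1 (hpr S) (hP0 _ _)
              (mul_nonneg (Real.exp_pos _).le (dLap_nonneg' _ _ hε2 _))
        _ = _ := by
            have : Real.exp ε = Real.exp (ε / 2) * Real.exp (ε / 2) := by
              rw [← Real.exp_add]; congr 1; ring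
            rw [this]; ring
    · have : F a T S = 0 := by simp [hF, h]
      rw [this]
      exact mul_nonneg (Real.exp_pos _).le (hF0 _ _ _)
  have hin : ∀ T, ∑' S, F b T (S + c) = ∑' S, F b T S := fun T =>
    (Equiv.addRight c).tsum_eq (F b T)
  have hins : ∀ T, Summable fun S => F b T (S + c) := fun T =>
    (Equiv.addRight c).summable_iff.2 (hFs b T)
  have hout : ∑' T : ℤ, ∑' S, F b (T + 1) S = ∑' T, ∑' S, F b T S :=
    (Equiv.addRight (1 : ℤ)).tsum_eq (fun T => ∑' S, F b T S)
  have houts : Summable fun T : ℤ => ∑' S, F b (T + 1) S :=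
    (Equiv.addRight (1 : ℤ)).summable_iff.2 (hFss b)
  rw [hAT, hAT, ← hout, ← tsum_mul_left]
  refine (hFss a).tsum_le_tsum (fun T => ?_) (houts.mul_left _)
  rw [← hin, ← tsum_mul_left]
  exact (hFs a T).tsum_le_tsum (key T) ((hins _).mul_left _)

/-- The corrected above-threshold algorithm is ε-differentially private. -/
theorem above_threshold_dp {D : Type*} (ε : ℝ) (hε : 0 < ε) (n : ℕ) (hn : 1 ≤ n)
    (t : ℤ) (adj : D → D → Prop) (q : Fin n → D → ℤ)
    (hsens : ∀ i x y, adj x y → |q i x - q i y| ≤ 1) :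
    DP ε adj (fun d => AT n t ε (fun i => q i d)) := by
  intro d1 d2 hadj o
  have hs : ∀ i, |q i d1 - q i d2| ≤ 1 := fun i => hsens i _ _ hadj
  have hε4 : 0 < ε / 4 := by positivity
  rcases o with _ | k
  · apply AT_core' n t ε hε _ _ (fun i => q i d2 - q i d1)
    · intro T S h
      rw [firstAbove_none'] at h ⊢
      intro i
      have h1 := h i
      have h2 := abs_le.1 (hs i)
      simp only [Pi.add_apply]
      omega
    · intro S
      have h1 : ∀ i, dLap (q i d2) (ε / 4) ((S + fun i => q i d2 - q i d1) i)
          = dLap (q i d1) (ε / 4) (S i) := by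
        intro i
        simp only [dLap, Pi.add_apply]
        congr 5
        ring
      simp only [h1]
      exact le_mul_of_one_le_left
        (Finset.prod_nonneg fun i _ => dLap_nonneg' _ _ hε4 _)
        (Real.one_le_exp (by positivity))
  · apply AT_core' n t ε hε _ _ (fun i => if i = k then 1 else q i d2 - q i d1)
    · intro T S h
      rw [firstAbove_some'] at h ⊢
      refine ⟨by simpa using h.1, fun i hi => ?_⟩
      have h1 := h.2 i hi
      have h2 := abs_le.1 (hs i)
      simp only [Pi.add_apply, hi.ne, if_false]
      omega
    · intro S
      have h1 : ∀ i, dLap (q i d1) (ε / 4) (S i) ≤ (if i = k then Real.exp (ε / 2) else 1) *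
          dLap (q i d2) (ε / 4) ((S + fun i => if i = k then 1 else q i d2 - q i d1) i) := by
        intro i
        by_cases hi : i = k
        · simp only [Pi.add_apply, hi, if_true]
          have h2 := abs_le.1 (hs k)
          have := dLap_shift' (q k d1) (q k d2) (ε / 4) hε4 (S k) (S k + 1) 2 (by
            rw [abs_le]; constructor <;> cases abs_cases (S k - q k d1) <;> omega)
          have h3 : ε / 4 * ((2 : ℤ) : ℝ) = ε / 2 := by push_cast; ring
          rwa [h3] at this
        · simp only [Pi.add_apply, hi, if_false, one_mul]
          apply le_of_eq
          simp only [dLap]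
          congr 5
          ring
      calc _ ≤ ∏ i, ((if i = k then Real.exp (ε / 2) else 1) *
          dLap (q i d2) (ε / 4) ((S + fun i => if i = k then 1 else q i d2 - q i d1) i)) :=
            Finset.prod_le_prod (fun i _ => dLap_nonneg' _ _ hε4 _) fun i _ => h1 i
        _ = _ := by
            rw [Finset.prod_mul_distrib, Finset.prod_ite_eq']
            simp
end
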